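/- Let K be a positive integer, P > 0, h ∈ ℝᴷ, and ã ∈ ℝᴷ with ã ≠ 0, and let β_k > 0. Then for every α ∈ ℝ with P‖αh − ã‖² + α² > 0, max{0, (1/2)·log₂(P β_k² / (P‖αh − ã‖² + α²))} ≤ max{0, −(1/2)·log₂(‖ã‖² − P⟨h,ã⟩²/(1+P‖h‖²)) + (1/2)·log₂ β_k²}, with equality when α = P⟨h,ã⟩/(1 + P‖h‖²). In other words, the supremum over α of [(1/2)log₂(Pβ_k²/(P‖αh−ã‖²+α²))]⁺ equals the computation rate expression r_k(h, a, β) = [−(1/2)log₂(‖ã‖² − P⟨h,ã⟩²/(1+P‖h‖²)) + (1/2)log₂ β_k²]⁺. -/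

import Mathlib

/-! The equivalent noise power is a quadratic in `α`. Completing the square shows that its minimum
is `P * D`, where `D` is the argument of the logarithm in the computation rate. The noise power is
positive at every scaling, in particular at the minimizer, which gives `0 < D` without invoking the
Cauchy–Schwarz inequality. -/

section ReceiverScaling

variable {E : Type*} [SeminormedAddCommGroup E] [InnerProductSpace ℝ E] {P β : ℝ} {h t : E}

/-- The equivalent noise power `N(α)` seen by a receiver that scales by `α` a signal with channel
vector `h` and decodes the combination with coefficient vector `t`, the `ã` of the paper. -/
def equivalentNoisePower (P : ℝ) (h t : E) (α : ℝ) : ℝ :=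
  P * ‖α • h - t‖ ^ 2 + α ^ 2

/-- The MMSE receiver scaling, at which the equivalent noise power is minimal. -/
noncomputable def mmseScaling (P : ℝ) (h t : E) : ℝ :=
  P * inner ℝ h t / (1 + P * ‖h‖ ^ 2)

/-- The minimal equivalent noise power relative to the transmit power `P`. It is given by its closed
form, so that it appears verbatim in the computation rate. -/
noncomputable def normalizedMinNoise (P : ℝ) (h t : E) : ℝ :=
  ‖t‖ ^ 2 - P * inner ℝ h t ^ 2 / (1 + P * ‖h‖ ^ 2)

/-- The rate achievable with receiver scaling `α`, before taking the positive part. -/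
noncomputable def achievableRate (P β : ℝ) (h t : E) (α : ℝ) : ℝ :=
  (1 / 2) * Real.logb 2 (P * β ^ 2 / equivalentNoisePower P h t α)

/-- The closed-form computation rate `r_k`, before taking the positive part. -/
noncomputable def computationRate (P β : ℝ) (h t : E) : ℝ :=
  -(1 / 2) * Real.logb 2 (normalizedMinNoise P h t) + (1 / 2) * Real.logb 2 (β ^ 2)

theorem equivalentNoisePower_pos (hP : 0 < P) (ht : ‖t‖ ≠ 0) (α : ℝ) :
    0 < equivalentNoisePower P h t α := by
  unfold equivalentNoisePower
  rcases eq_or_ne α 0 with rfl | hα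
  · simp only [zero_smul, zero_sub, norm_neg]
    positivity
  · positivity

theorem equivalentNoisePower_eq_add_sq (hPh : 1 + P * ‖h‖ ^ 2 ≠ 0) (α : ℝ) :
    equivalentNoisePower P h t α =
      P * normalizedMinNoise P h t + (1 + P * ‖h‖ ^ 2) * (α - mmseScaling P h t) ^ 2 := by
  have norm_sq_expand :
      ‖α • h - t‖ ^ 2 = α ^ 2 * ‖h‖ ^ 2 - 2 * (α * inner ℝ h t) + ‖t‖ ^ 2 := by
    rw [norm_sub_sq_real, real_inner_smul_left, norm_smul, mul_pow, Real.norm_eq_abs, sq_abs]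
  rw [equivalentNoisePower, norm_sq_expand, normalizedMinNoise, mmseScaling]
  field_simp
  ring

theorem equivalentNoisePower_mmseScaling (hPh : 1 + P * ‖h‖ ^ 2 ≠ 0) :
    equivalentNoisePower P h t (mmseScaling P h t) = P * normalizedMinNoise P h t := by
  rw [equivalentNoisePower_eq_add_sq hPh, sub_self, zero_pow two_ne_zero, mul_zero, add_zero]

theorem equivalentNoisePower_mmseScaling_le (hPh : 0 < 1 + P * ‖h‖ ^ 2) (α : ℝ) :
    equivalentNoisePower P h t (mmseScaling P h t) ≤ equivalentNoisePower P h t α := by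
  rw [equivalentNoisePower_mmseScaling hPh.ne', equivalentNoisePower_eq_add_sq hPh.ne' α]
  exact le_add_of_nonneg_right (by positivity)

theorem normalizedMinNoise_pos (hP : 0 < P) (ht : ‖t‖ ≠ 0) : 0 < normalizedMinNoise P h t := by
  have minNoise_pos : 0 < P * normalizedMinNoise P h t := by
    rw [← equivalentNoisePower_mmseScaling (by positivity)]
    exact equivalentNoisePower_pos hP ht _
  exact pos_of_mul_pos_right minNoise_pos hP.le

theorem achievableRate_le_achievableRate_mmseScaling (hP : 0 < P) (hβ : β ≠ 0) (ht : ‖t‖ ≠ 0)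
    (α : ℝ) : achievableRate P β h t α ≤ achievableRate P β h t (mmseScaling P h t) := by
  have noise_pos := equivalentNoisePower_pos (h := h) hP ht
  have snr_le : P * β ^ 2 / equivalentNoisePower P h t α ≤
      P * β ^ 2 / equivalentNoisePower P h t (mmseScaling P h t) :=
    div_le_div_of_nonneg_left (by positivity) (noise_pos _)
      (equivalentNoisePower_mmseScaling_le (by positivity) α)
  have snr_pos : 0 < P * β ^ 2 / equivalentNoisePower P h t α :=
    div_pos (by positivity) (noise_pos α)
  exact mul_le_mul_of_nonneg_left
    (Real.logb_le_logb_of_le one_lt_two snr_pos snr_le) one_half_pos.le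

theorem achievableRate_mmseScaling (hP : 0 < P) (hβ : β ≠ 0) (ht : ‖t‖ ≠ 0) :
    achievableRate P β h t (mmseScaling P h t) = computationRate P β h t := by
  rw [achievableRate, computationRate, equivalentNoisePower_mmseScaling (by positivity),
    mul_div_mul_left _ _ hP.ne',
    Real.logb_div (pow_ne_zero 2 hβ) (normalizedMinNoise_pos hP ht).ne']
  ring

theorem rate_optimization_over_alpha_general (hP : 0 < P) (hβ : β ≠ 0) (ht : ‖t‖ ≠ 0) :
    (∀ α : ℝ, achievableRate P β h t α ≤ computationRate P β h t) ∧
      achievableRate P β h t (mmseScaling P h t) = computationRate P β h t :=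
  have attained := achievableRate_mmseScaling hP hβ ht
  ⟨fun α => attained ▸ achievableRate_le_achievableRate_mmseScaling hP hβ ht α, attained⟩

end ReceiverScaling

/-- optimizing the achievable rate over the receiver scaling `α`
yields the closed-form computation rate: for every `α` with positive equivalent
noise power `N(α) = P‖α•h − ta‖² + α²`,
`[½log₂(Pβ_k²/N(α))]⁺ ≤ [−½log₂(‖ta‖² − P⟨h,ta⟩²/(1+P‖h‖²)) + ½log₂ β_k²]⁺`,
with equality at the MMSE scaling `α = P⟨h,ta⟩/(1+P‖h‖²)`. -/
theorem rate_optimization_over_alpha (K : ℕ) (hK : 0 < K) (P : ℝ) (hP : 0 < P)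
    (h ta : EuclideanSpace ℝ (Fin K)) (hta : ta ≠ 0) (βk : ℝ) (hβk : 0 < βk) :
    (∀ α : ℝ, 0 < P * ‖α • h - ta‖ ^ 2 + α ^ 2 →
      max 0 ((1 / 2) * Real.logb 2 (P * βk ^ 2 / (P * ‖α • h - ta‖ ^ 2 + α ^ 2))) ≤
        max 0 (-(1 / 2) * Real.logb 2 (‖ta‖ ^ 2 - P * (inner ℝ h ta : ℝ) ^ 2 / (1 + P * ‖h‖ ^ 2))
          + (1 / 2) * Real.logb 2 (βk ^ 2))) ∧
    (let αstar : ℝ := P * (inner ℝ h ta : ℝ) / (1 + P * ‖h‖ ^ 2);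
      max 0 ((1 / 2) * Real.logb 2 (P * βk ^ 2 / (P * ‖αstar • h - ta‖ ^ 2 + αstar ^ 2))) =
        max 0 (-(1 / 2) * Real.logb 2 (‖ta‖ ^ 2 - P * (inner ℝ h ta : ℝ) ^ 2 / (1 + P * ‖h‖ ^ 2))
          + (1 / 2) * Real.logb 2 (βk ^ 2))) := by
  obtain ⟨rate_le, rate_eq⟩ :=
    rate_optimization_over_alpha_general (h := h) hP hβk.ne' (norm_ne_zero_iff.mpr hta)
  exact ⟨fun α _ => max_le_max_left 0 (rate_le α), congrArg (max 0) rate_eq⟩
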